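/- Let A ∈ ℝ^{n×n}, B ∈ ℝ^{n×m}, Q ∈ ℝ^{n×n} symmetric, γ > 0, μ ≥ 1, and let P ∈ ℝ^{n×n} be a symmetric positive semidefinite matrix satisfying P = Q + μ²AᵀPA − μ⁴AᵀPB(γI_m + μ²BᵀPB)⁻¹BᵀPA. Define H₁₂ = μ²AᵀPB, H₂₂ = γI_m + μ²BᵀPB, and K = H₂₂⁻¹H₁₂ᵀ. Let c ∈ ℝ, λ ∈ ℂ, β ∈ ℝ, and suppose that: (i) the block matrix [[ Q + c²γ|λ|²·H₁₂H₂₂⁻²H₁₂ᵀ, βH₁₂ ],[ βH₁₂ᵀ, H₂₂ ]] is positive semidefinite, and (ii) 1 − 2c·Re λ + c²|λ|² ≤ β². Then, with M = μ·A − μcλ·BK (a complex n×n matrix), the Hermitian matrix P − Mᴴ P M is positive semidefinite (all real matrices regarded as complex matrices entrywise). -/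

import Mathlib

open Matrix ComplexOrder

/-!
Rescaling `A` and `B` by `μ` reduces to `μ = 1`. Let `H = R + BᴴPB` with `R = γI`, so that the
gain satisfies `HK = BᴴPA` and the Riccati equation reads `P = Q + AᴴPA - KᴴHK`. Expanding the
quadratic form of the closed loop `A - zBK`, where `z = cλ`, gives
`P - (A - zBK)ᴴP(A - zBK) = (Q + |z|²KᴴRK) - |1 - z|²KᴴHK`.
Congruence of the block matrix with the column `[I; -βK]` shows that
`(Q + |z|²KᴴRK) - β²KᴴHK` is positive semidefinite, and `|1 - z|² ≤ β²`.
-/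

theorem map_smul_ringHom {m n α β : Type*} [Semiring α] [Semiring β] (f : α →+* β) (r : α)
    (M : Matrix m n α) : (r • M).map f = f r • M.map f :=
  Matrix.map_smulₛₗ f f r (map_mul f r) M

section PosSemidef

variable {m n : Type*} [Finite n]

theorem posSemidef_map {𝕜 α : Type*} [RCLike 𝕜] [CommRing α] [PartialOrder α] [StarRing α]
    [StarOrderedRing α] {M : Matrix n n 𝕜} (hM : M.PosSemidef) (f : 𝕜 →+* α)
    (hf : Function.Semiconj f star star) : (M.map f).PosSemidef := by
  classical
  cases nonempty_fintype n
  obtain ⟨L, rfl⟩ : ∃ L : Matrix n n 𝕜, M = Lᴴ * L := by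
    open scoped MatrixOrder in exact CStarAlgebra.nonneg_iff_eq_star_mul_self.mp hM.nonneg
  rw [Matrix.map_mul, conjTranspose_map f hf]
  exact posSemidef_conjTranspose_mul_self _

theorem posSemidef_sub_of_fromBlocks [Fintype m] {α : Type*} [CommRing α] [PartialOrder α]
    [StarRing α] {X : Matrix n n α} {H : Matrix m m α} {K : Matrix m n α} {b : α}
    (h : (fromBlocks X (star b • (Kᴴ * H)) (b • (H * K)) H).PosSemidef) :
    (X - (star b * b) • (Kᴴ * H * K)).PosSemidef := by
  classical
  cases nonempty_fintype n
  convert h.conjTranspose_mul_mul_same (fromRows 1 (-(b • K))) using 1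
  rw [conjTranspose_fromRows_eq_fromCols_conjTranspose, fromCols_mul_fromBlocks,
    fromCols_mul_fromRows]
  simp [Matrix.mul_assoc, smul_smul, mul_comm, sub_eq_add_neg]

end PosSemidef

theorem norm_one_sub_ofReal_mul_sq (c : ℝ) (z : ℂ) :
    ‖1 - (c : ℂ) * z‖ ^ 2 = 1 - 2 * c * z.re + c ^ 2 * ‖z‖ ^ 2 := by
  simp only [← Complex.normSq_eq_norm_sq, Complex.normSq_sub, map_mul, Complex.normSq_ofReal,
    Complex.conj_ofReal, one_mul, Complex.re_ofReal_mul, Complex.conj_re, map_one]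
  ring

section Riccati

variable {m n α : Type*} [Fintype n] [CommRing α] [StarRing α]

/-- The `(2,2)` block `H₂₂ = R + BᴴPB` of the Hessian of the Q-function: the quadratic cost of an
input `u`, made of its own cost `uᴴRu` and the cost `(Bu)ᴴP(Bu)` of its effect on the state. -/
def inputHessian (B : Matrix n m α) (R : Matrix m m α) (P : Matrix n n α) : Matrix m m α :=
  R + Bᴴ * P * B

/-- `P` solves the discrete algebraic Riccati equation of the system `(A, B)` with costs `(Q, R)`,
and `K` is a corresponding feedback gain. The gain is specified by the normal equation
`H₂₂ K = BᴴPA` instead of `K = H₂₂⁻¹BᴴPA`, so that `H₂₂` may be singular. -/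
structure IsRiccatiSolution [Fintype m] (A : Matrix n n α) (B : Matrix n m α) (Q : Matrix n n α)
    (R : Matrix m m α) (P : Matrix n n α) (K : Matrix m n α) : Prop where
  isHermitian : P.IsHermitian
  gain_eq : inputHessian B R P * K = Bᴴ * P * A
  riccati_eq : P = Q + Aᴴ * P * A - Kᴴ * inputHessian B R P * K

variable {A Q P : Matrix n n α} {B : Matrix n m α} {R : Matrix m m α} {K : Matrix m n α}

theorem inputHessian_map {β : Type*} [CommRing β] [StarRing β] (f : α →+* β)
    (hf : Function.Semiconj f star star) :
    inputHessian (B.map f) (R.map f) (P.map f) = (inputHessian B R P).map f := by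
  simp only [inputHessian, ← conjTranspose_map f hf, ← Matrix.map_mul, Matrix.map_add f (map_add f)]

theorem isHermitian_inputHessian (hR : R.IsHermitian) (hP : P.IsHermitian) :
    (inputHessian B R P).IsHermitian :=
  hR.add (isHermitian_conjTranspose_mul_mul B hP)

theorem inputHessian_smul [TrivialStar α] (μ : α) (B : Matrix n m α) (R : Matrix m m α)
    (P : Matrix n n α) :
    inputHessian (μ • B) R P = R + μ ^ 2 • (Bᵀ * P * B) := by
  simp [inputHessian, smul_smul, sq]

namespace IsRiccatiSolution

variable [Fintype m]

theorem of_nonsing_inv [DecidableEq m] (hP : P.IsHermitian) (hR : R.IsHermitian)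
    (hH : IsUnit (inputHessian B R P))
    (hric : P = Q + Aᴴ * P * A - Aᴴ * P * B * (inputHessian B R P)⁻¹ * (Bᴴ * P * A)) :
    IsRiccatiSolution A B Q R P ((inputHessian B R P)⁻¹ * (Bᴴ * P * A)) where
  isHermitian := hP
  gain_eq := mul_nonsing_inv_cancel_left _ _ ((isUnit_iff_isUnit_det _).mp hH)
  riccati_eq := by
    rw [Matrix.mul_assoc _ (inputHessian B R P),
      mul_nonsing_inv_cancel_left _ _ ((isUnit_iff_isUnit_det _).mp hH), conjTranspose_mul,
      (isHermitian_inputHessian hR hP).inv.eq]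
    simpa [hP.eq, Matrix.mul_assoc] using hric

theorem smul_of_nonsing_inv [DecidableEq m] [TrivialStar α] {μ : α} (hP : P.IsSymm) (hR : R.IsSymm)
    (hH : IsUnit (R + μ ^ 2 • (Bᵀ * P * B)))
    (hric : P = Q + μ ^ 2 • (Aᵀ * P * A) -
      μ ^ 4 • (Aᵀ * P * B * (R + μ ^ 2 • (Bᵀ * P * B))⁻¹ * (Bᵀ * P * A))) :
    IsRiccatiSolution (μ • A) (μ • B) Q R P
      ((R + μ ^ 2 • (Bᵀ * P * B))⁻¹ * (μ ^ 2 • (Aᵀ * P * B))ᵀ) := by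
  have hgain : (μ ^ 2 • (Aᵀ * P * B))ᵀ = (μ • B)ᴴ * P * (μ • A) := by
    simp [hP.eq, smul_smul, sq, Matrix.mul_assoc]
  rw [← inputHessian_smul μ B R P] at hric hH ⊢
  rw [hgain]
  refine .of_nonsing_inv (isHermitian_iff_isSymm.mpr hP) (isHermitian_iff_isSymm.mpr hR) hH
    (hric.trans ?_)
  simp only [conjTranspose_eq_transpose_of_trivial, transpose_smul, Matrix.smul_mul,
    Matrix.mul_smul, smul_smul]
  module

theorem map {β : Type*} [CommRing β] [StarRing β] (h : IsRiccatiSolution A B Q R P K)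
    (f : α →+* β) (hf : Function.Semiconj f star star) :
    IsRiccatiSolution (A.map f) (B.map f) (Q.map f) (R.map f) (P.map f) (K.map f) where
  isHermitian := h.isHermitian.map f hf
  gain_eq := by
    simp only [inputHessian_map f hf, ← conjTranspose_map f hf, ← Matrix.map_mul, h.gain_eq]
  riccati_eq := by
    simp only [inputHessian_map f hf, ← conjTranspose_map f hf, ← Matrix.map_mul,
      ← Matrix.map_add f (map_add f), ← Matrix.map_sub f (map_sub f), ← h.riccati_eq]

theorem sub_closedLoop_eq (h : IsRiccatiSolution A B Q R P K)
    (hH : (inputHessian B R P).IsHermitian) (z : α) :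
    P - (A - z • (B * K))ᴴ * P * (A - z • (B * K)) =
      Q + (star z * z) • (Kᴴ * R * K) -
        (star (1 - z) * (1 - z)) • (Kᴴ * inputHessian B R P * K) := by
  have cross : (B * K)ᴴ * P * A = Kᴴ * inputHessian B R P * K := by
    rw [conjTranspose_mul, Matrix.mul_assoc Kᴴ (inputHessian B R P), h.gain_eq]
    simp only [Matrix.mul_assoc]
  have cross_star : Aᴴ * P * (B * K) = Kᴴ * inputHessian B R P * K := by
    simpa [h.isHermitian.eq, hH.eq, Matrix.mul_assoc] using congrArg conjTranspose cross
  have quad : (B * K)ᴴ * P * (B * K) = Kᴴ * inputHessian B R P * K - Kᴴ * R * K := by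
    simp only [inputHessian, conjTranspose_mul, Matrix.mul_add, Matrix.add_mul, Matrix.mul_assoc,
      add_sub_cancel_left]
  have drift : Aᴴ * P * A = P - Q + Kᴴ * inputHessian B R P * K := by
    rw [← sub_eq_iff_eq_add, eq_sub_iff_add_eq', ← add_sub_assoc, ← h.riccati_eq]
  simp only [conjTranspose_sub, conjTranspose_smul, Matrix.sub_mul, Matrix.mul_sub,
    Matrix.smul_mul, Matrix.mul_smul, cross, cross_star, quad, drift, star_sub, star_one]
  module

end IsRiccatiSolution

end Riccati

section RCLike

variable {m n 𝕜 : Type*} [Fintype n] [RCLike 𝕜]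

theorem posDef_inputHessian [Finite m] {B : Matrix n m 𝕜} {R : Matrix m m 𝕜} {P : Matrix n n 𝕜}
    (hR : R.PosDef) (hP : P.PosSemidef) : (inputHessian B R P).PosDef :=
  hR.add_posSemidef (hP.conjTranspose_mul_mul_same B)

variable [Fintype m]

theorem IsRiccatiSolution.posSemidef_sub_closedLoop {A Q P : Matrix n n 𝕜} {B : Matrix n m 𝕜}
    {R : Matrix m m 𝕜} {K : Matrix m n 𝕜} (h : IsRiccatiSolution A B Q R P K) {z b : 𝕜}
    (hzb : ‖1 - z‖ ≤ ‖b‖)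
    (hblock : (fromBlocks (Q + (star z * z) • (Kᴴ * R * K))
      (star b • (Kᴴ * inputHessian B R P)) (b • (inputHessian B R P * K))
      (inputHessian B R P)).PosSemidef) :
    (P - (A - z • (B * K))ᴴ * P * (A - z • (B * K))).PosSemidef := by
  have hH : (inputHessian B R P).PosSemidef := hblock.submatrix Sum.inr
  have hgap : 0 ≤ star b * b - star (1 - z) * (1 - z) := by
    simp only [sub_nonneg, RCLike.star_def, RCLike.conj_mul]
    exact_mod_cast pow_le_pow_left₀ (norm_nonneg _) hzb 2
  have hsum := (posSemidef_sub_of_fromBlocks hblock).add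
    ((hH.conjTranspose_mul_mul_same K).smul hgap)
  rwa [sub_smul, sub_add_sub_cancel, ← h.sub_closedLoop_eq hH.isHermitian] at hsum

end RCLike

section Real

variable {m n : Type*} [Fintype n]

theorem posDef_smul_one_add_sq_smul [Finite m] [DecidableEq m] {B : Matrix n m ℝ}
    {P : Matrix n n ℝ} {γ : ℝ} (hγ : 0 < γ) (μ : ℝ) (hP : P.PosSemidef) :
    (γ • (1 : Matrix m m ℝ) + μ ^ 2 • (Bᵀ * P * B)).PosDef :=
  inputHessian_smul μ B _ P ▸ posDef_inputHessian (Matrix.PosDef.one.smul hγ) hP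

variable [Fintype m]

theorem IsRiccatiSolution.posSemidef_sub_map_closedLoop {A Q P : Matrix n n ℝ} {B : Matrix n m ℝ}
    {R : Matrix m m ℝ} {K : Matrix m n ℝ} (h : IsRiccatiSolution A B Q R P K) {z : ℂ} {b : ℝ}
    (hzb : ‖1 - z‖ ^ 2 ≤ b ^ 2)
    (hblock : (fromBlocks (Q + ‖z‖ ^ 2 • (Kᵀ * R * K))
      (b • (Kᵀ * inputHessian B R P)) (b • (inputHessian B R P * K))
      (inputHessian B R P)).PosSemidef) :
    (P.map Complex.ofRealHom -
      (A.map Complex.ofRealHom - z • (B.map Complex.ofRealHom * K.map Complex.ofRealHom))ᴴ *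
        P.map Complex.ofRealHom *
      (A.map Complex.ofRealHom -
        z • (B.map Complex.ofRealHom * K.map Complex.ofRealHom))).PosSemidef := by
  have hf : Function.Semiconj Complex.ofRealHom star star := fun x => by simp
  refine (h.map Complex.ofRealHom hf).posSemidef_sub_closedLoop (b := b) ?_ ?_
  · simpa using sq_le_sq.mp hzb
  · have hblockC := posSemidef_map hblock Complex.ofRealHom hf
    simp only [fromBlocks_map, Matrix.map_add _ (map_add _), map_smul_ringHom, Matrix.map_mul,
      ← conjTranspose_eq_transpose_of_trivial, conjTranspose_map _ hf] at hblockC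
    simpa [inputHessian_map _ hf, Complex.conj_mul'] using hblockC

theorem quadratic_lmi_implies_lyapunov_general [DecidableEq m]
    {A Q P : Matrix n n ℝ} {B : Matrix n m ℝ} {γ μ : ℝ} (hP : P.IsSymm)
    (hric : P = Q + μ ^ 2 • (Aᵀ * P * A) -
      μ ^ 4 • (Aᵀ * P * B *
        (γ • (1 : Matrix m m ℝ) + μ ^ 2 • (Bᵀ * P * B))⁻¹ * (Bᵀ * P * A)))
    {H₁₂ : Matrix n m ℝ} (hH₁₂ : H₁₂ = μ ^ 2 • (Aᵀ * P * B))
    {H₂₂ : Matrix m m ℝ} (hH₂₂ : H₂₂ = γ • (1 : Matrix m m ℝ) + μ ^ 2 • (Bᵀ * P * B))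
    (hunit : IsUnit H₂₂) {K : Matrix m n ℝ} (hK : K = H₂₂⁻¹ * H₁₂ᵀ) {c : ℝ} {lam : ℂ} {β : ℝ}
    (hSq : (fromBlocks (Q + (c ^ 2 * γ * ‖lam‖ ^ 2) • (H₁₂ * (H₂₂⁻¹) ^ 2 * H₁₂ᵀ))
      (β • H₁₂) (β • H₁₂ᵀ) H₂₂).PosSemidef)
    (hβ : 1 - 2 * c * lam.re + c ^ 2 * ‖lam‖ ^ 2 ≤ β ^ 2) :
    (P.map (Complex.ofReal ·) -
      ((μ : ℂ) • A.map (Complex.ofReal ·) - ((μ : ℂ) * (c : ℂ) * lam) •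
          (B.map (Complex.ofReal ·) * K.map (Complex.ofReal ·)))ᴴ *
        P.map (Complex.ofReal ·) *
      ((μ : ℂ) • A.map (Complex.ofReal ·) - ((μ : ℂ) * (c : ℂ) * lam) •
          (B.map (Complex.ofReal ·) * K.map (Complex.ofReal ·)))).PosSemidef := by
  have hsol : IsRiccatiSolution (μ • A) (μ • B) Q (γ • 1) P K := by
    rw [hK, hH₁₂, hH₂₂]
    exact .smul_of_nonsing_inv hP (isSymm_one.smul γ) (hH₂₂ ▸ hunit) hric
  have hH : inputHessian (μ • B) (γ • 1) P = H₂₂ := (inputHessian_smul ..).trans hH₂₂.symm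
  have hHsymm : H₂₂ᵀ = H₂₂ := hH ▸ isHermitian_inputHessian (isSymm_one.smul γ) hP
  have hgain : H₂₂ * K = H₁₂ᵀ := by
    rw [hK, mul_nonsing_inv_cancel_left _ _ ((isUnit_iff_isUnit_det _).mp hunit)]
  have hgain_transpose : Kᵀ * H₂₂ = H₁₂ := by
    simpa [hHsymm] using congrArg transpose hgain
  have hcost : H₁₂ * (H₂₂⁻¹) ^ 2 * H₁₂ᵀ = Kᵀ * K := by
    simp [hK, transpose_nonsing_inv, hHsymm, sq, Matrix.mul_assoc]
  have hweight : ‖(c : ℂ) * lam‖ ^ 2 • (Kᵀ * (γ • (1 : Matrix m m ℝ)) * K) =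
      (c ^ 2 * γ * ‖lam‖ ^ 2) • (H₁₂ * (H₂₂⁻¹) ^ 2 * H₁₂ᵀ) := by
    rw [hcost, Matrix.mul_smul, Matrix.mul_one, Matrix.smul_mul, smul_smul, norm_mul, mul_pow,
      Complex.norm_real, Real.norm_eq_abs, sq_abs, mul_right_comm]
  have hlyap := hsol.posSemidef_sub_map_closedLoop (z := c * lam) (b := β)
    (by rwa [norm_one_sub_ofReal_mul_sq]) (by rwa [hH, hgain, hgain_transpose, hweight])
  have hscalar : c * lam * Complex.ofRealHom μ = μ * c * lam := by
    rw [Complex.ofRealHom_eq_coe]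
    ring
  rwa [map_smul_ringHom, map_smul_ringHom, Matrix.smul_mul, smul_smul, hscalar] at hlyap

end Real

/-- Theorem 5, exact (non-convex) feasibility condition: if the block LMI
`𝒮_q(β,c,λ,H) ⪰ 0` holds and `1 − 2c·Re λ + c²|λ|² ≤ β²`, then
`P − MᴴPM ⪰ 0` with `M = μA − μcλ·BK`. -/
theorem quadratic_lmi_implies_lyapunov (n m : ℕ)
    (A : Matrix (Fin n) (Fin n) ℝ) (B : Matrix (Fin n) (Fin m) ℝ)
    (Q : Matrix (Fin n) (Fin n) ℝ) (hQ : Q.IsSymm)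
    (γ μ : ℝ) (hγ : 0 < γ) (hμ : 1 ≤ μ)
    (P : Matrix (Fin n) (Fin n) ℝ) (hP : P.PosSemidef)
    (hric : P = Q + μ ^ 2 • (Aᵀ * P * A) -
      μ ^ 4 • (Aᵀ * P * B *
        (γ • (1 : Matrix (Fin m) (Fin m) ℝ) + μ ^ 2 • (Bᵀ * P * B))⁻¹ * (Bᵀ * P * A)))
    (H₁₂ : Matrix (Fin n) (Fin m) ℝ) (hH₁₂ : H₁₂ = μ ^ 2 • (Aᵀ * P * B))
    (H₂₂ : Matrix (Fin m) (Fin m) ℝ)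
    (hH₂₂ : H₂₂ = γ • (1 : Matrix (Fin m) (Fin m) ℝ) + μ ^ 2 • (Bᵀ * P * B))
    (K : Matrix (Fin m) (Fin n) ℝ) (hK : K = H₂₂⁻¹ * H₁₂ᵀ)
    (c : ℝ) (lam : ℂ) (β : ℝ)
    (hSq : (Matrix.fromBlocks
        (Q + (c ^ 2 * γ * ‖lam‖ ^ 2) • (H₁₂ * (H₂₂⁻¹) ^ 2 * H₁₂ᵀ))
        (β • H₁₂) (β • H₁₂ᵀ) H₂₂).PosSemidef)
    (hβ : 1 - 2 * c * lam.re + c ^ 2 * ‖lam‖ ^ 2 ≤ β ^ 2) :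
    ((P.map (Complex.ofReal ·)) -
      ((μ : ℂ) • A.map (Complex.ofReal ·) -
        ((μ : ℂ) * (c : ℂ) * lam) •
          (B.map (Complex.ofReal ·) * K.map (Complex.ofReal ·)))ᴴ *
        (P.map (Complex.ofReal ·)) *
      ((μ : ℂ) • A.map (Complex.ofReal ·) -
        ((μ : ℂ) * (c : ℂ) * lam) •
          (B.map (Complex.ofReal ·) * K.map (Complex.ofReal ·)))).PosSemidef := by
  exact quadratic_lmi_implies_lyapunov_general hP.isHermitian hric hH₁₂ hH₂₂
    (hH₂₂ ▸ (posDef_smul_one_add_sq_smul hγ μ hP).isUnit) hK hSq hβ
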